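/- arXiv:2501.00938 — 2 statements merged into one kernel-verified Lean document; each statement's English description precedes it below -/
import Mathlib

section
/- Let ℓ ≥ 1 be an integer and let a ∈ ℂ with a ≠ 1. Then the vector z ∈ ℂ^ℓ with entries z_j = a·a^{j−1}/(a−1)² − j/(a−1) + (1/(a−1))·(1 + ℓ − a^{ℓ+1}/(a−1)) for j = 1, …, ℓ satisfies B₀ z = D𝟙, where D𝟙 is the vector with entries (D𝟙)_j = a^{j−1}; and the first entry of z equals (ℓ(a−1) + a(1 − a^ℓ))/(a−1)². -/
/-!
Away from the corner, `B₀` is the second difference operator; the corner entry `-1` encodes a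
Neumann condition at the ghost index `0` (with entries indexed from `1`), and the truncation after
`ℓ` a Dirichlet condition at the ghost index `ℓ + 1`. So `B₀ z = (a ^ (j - 1))_j` is solved by the
second antidifference `a ^ n / (a - 1) ^ 2 - n / (a - 1)` of `a ^ n`, whose first difference
`∑ k < n, a ^ k` vanishes at `n = 0`, shifted by a constant to vanish at `n = ℓ + 1`.
-/

open Matrix

/-- The ℓ×ℓ complex tridiagonal matrix B₀ with (B₀)₁₁ = −1, other diagonal
entries −2, and super/sub-diagonal entries 1. -/
def B0C (ℓ : ℕ) : Matrix (Fin ℓ) (Fin ℓ) ℂ := fun i j =>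
  if i = j then (if (i : ℕ) = 0 then -1 else -2)
  else if (i : ℕ) + 1 = (j : ℕ) ∨ (j : ℕ) + 1 = (i : ℕ) then 1 else 0

section SecondDifference

open scoped fwdDiff

theorem B0C_mulVec_apply {ℓ : ℕ} (f : ℕ → ℂ) (i : Fin ℓ) :
    (B0C ℓ *ᵥ fun j ↦ f j) i =
      (if (i : ℕ) + 1 < ℓ then f (i + 1) else 0) + (if (i : ℕ) = 0 then 0 else f (i - 1))
        - (if (i : ℕ) = 0 then 1 else 2) * f i := by
  obtain ⟨i, hi⟩ := i
  have entry_mul (j : Fin ℓ) : B0C ℓ ⟨i, hi⟩ j * f j =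
      (if i + 1 = (j : ℕ) then f j else 0)
        + (if i = 0 then 0 else if i - 1 = (j : ℕ) then f j else 0)
        - (if i = 0 then 1 else 2) * (if i = (j : ℕ) then f j else 0) := by
    simp only [B0C, Fin.ext_iff]
    grind
  have sum_ite (k : ℕ) : ∑ j : Fin ℓ, (if k = (j : ℕ) then f j else 0) =
      if k < ℓ then f k else 0 := by
    rw [Fin.sum_univ_eq_sum_range (fun j ↦ if k = j then f j else 0), Finset.sum_ite_eq]
    simp only [Finset.mem_range]
  simp only [mulVec, dotProduct, entry_mul, Finset.sum_sub_distrib, Finset.sum_add_distrib,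
    ← Finset.mul_sum, Finset.sum_ite_irrel, Finset.sum_const_zero, sum_ite, hi,
    (i.sub_le 1).trans_lt hi, if_true]

theorem B0C_mulVec_eq_fwdDiff_fwdDiff (ℓ : ℕ) {g : ℕ → ℂ} (hg : Δ_[1] g 0 = 0) :
    (B0C ℓ *ᵥ fun j ↦ g (j + 1) - g (ℓ + 1)) = fun i : Fin ℓ ↦ Δ_[1] (Δ_[1] g) i := by
  funext i
  have neumann : g 1 = g 0 := sub_eq_zero.mp hg
  have dirichlet : (if (i : ℕ) + 1 < ℓ then g (i + 1 + 1) - g (ℓ + 1) else 0) =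
      g (i + 1 + 1) - g (ℓ + 1) := by
    grind
  rw [B0C_mulVec_apply (fun n ↦ g (n + 1) - g (ℓ + 1)), dirichlet]
  obtain ⟨_ | k, hk⟩ := i
  · simp only [fwdDiff, zero_add, if_true, neumann]
    ring
  · simp only [fwdDiff, Nat.add_sub_cancel, Nat.succ_ne_zero, if_false]
    ring

/-- The second antidifference of the geometric sequence `n ↦ a ^ n`, for `a ≠ 1`; its linear term
is normalized so that the first difference vanishes at `0`. -/
def geomSecondAntidiff {K : Type*} [Field K] (a : K) (n : ℕ) : K :=
  a ^ n / (a - 1) ^ 2 - n / (a - 1)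

variable {K : Type*} [Field K] {a : K}

theorem fwdDiff_geomSecondAntidiff (ha : a ≠ 1) :
    Δ_[1] (geomSecondAntidiff a) = fun n ↦ ∑ k ∈ Finset.range n, a ^ k := by
  have ha' : a - 1 ≠ 0 := sub_ne_zero.mpr ha
  funext n
  rw [geom_sum_eq ha]
  simp only [fwdDiff, geomSecondAntidiff]
  push_cast
  field_simp
  ring

theorem fwdDiff_fwdDiff_geomSecondAntidiff (ha : a ≠ 1) :
    Δ_[1] (Δ_[1] (geomSecondAntidiff a)) = fun n ↦ a ^ n := by
  funext n
  rw [fwdDiff_geomSecondAntidiff ha, fwdDiff, Finset.sum_range_succ_sub_sum]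

end SecondDifference

theorem B0_solve_D_ones (ℓ : ℕ) (hℓ : 0 < ℓ) (a : ℂ) (ha : a ≠ 1)
    (z : Fin ℓ → ℂ)
    (hz : ∀ j : Fin ℓ,
      z j = a * a ^ (j : ℕ) / (a - 1) ^ 2 - ((j : ℕ) + 1 : ℂ) / (a - 1)
              + (1 / (a - 1)) * (1 + ℓ - a ^ (ℓ + 1) / (a - 1))) :
    (B0C ℓ).mulVec z = (fun j : Fin ℓ => a ^ (j : ℕ)) ∧
    z ⟨0, hℓ⟩ = (ℓ * (a - 1) + a * (1 - a ^ ℓ)) / (a - 1) ^ 2 := by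
  have ha' : a - 1 ≠ 0 := sub_ne_zero.mpr ha
  have z_eq : z = fun j : Fin ℓ ↦
      geomSecondAntidiff a (j + 1) - geomSecondAntidiff a (ℓ + 1) := by
    funext j
    simp only [hz, geomSecondAntidiff]
    push_cast
    field_simp
    ring
  constructor
  · have neumann : fwdDiff 1 (geomSecondAntidiff a) 0 = 0 := by
      simp only [fwdDiff_geomSecondAntidiff ha, Finset.sum_range_zero]
    rw [z_eq, B0C_mulVec_eq_fwdDiff_fwdDiff ℓ neumann, fwdDiff_fwdDiff_geomSecondAntidiff ha]
  · simp only [z_eq, geomSecondAntidiff]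
    push_cast
    field_simp
    ring
end

section
/- Let ℓ ≥ 1 be an integer, let ω₁ ∈ ℝ, and set a = exp(i ω₁) and f = −1 + a⁻¹. Then 1 − ℓ·f ≠ 0, and the vector β₀ ∈ ℂ^ℓ with entries (β₀)_j = (a^ℓ / (1 − ℓ·f)) · ((1 + f) − f·j) for j = 1, …, ℓ satisfies (B₀ + f·e₁·e₁ᵀ) β₀ = −a^ℓ · e_ℓ, and its first entry is (β₀)₁ = a^ℓ / (1 + ℓ − ℓ·a⁻¹). -/
open Matrix Complex

/-- The first standard basis vector e₁ of ℂ^ℓ. -/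
def e1 (ℓ : ℕ) : Fin ℓ → ℂ := fun j => if (j : ℕ) = 0 then 1 else 0

/-- The last standard basis vector e_ℓ of ℂ^ℓ. -/
def eL (ℓ : ℕ) : Fin ℓ → ℂ := fun j => if (j : ℕ) = ℓ - 1 then 1 else 0

/-!
Put ghost values `u 0` and `u (ℓ + 1)` at the two ends of the grid. Then `B₀` is the second
difference with the homogeneous Neumann condition `u 1 - u 0 = 0` on the left and the homogeneous
Dirichlet condition `u (ℓ + 1) = 0` on the right; a sequence violating one of them picks up a
multiple of `e₁` or `e_ℓ`. Adding `f e₁ e₁ᵀ` turns the left condition into the Robin condition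
`u 1 - u 0 + f u 1 = 0`. The affine sequence `u k = (1 + f) - f k` meets it, so only the term
`-u (ℓ + 1) e_ℓ = -(1 - ℓ f) e_ℓ` survives. The factor `1 - ℓ f` vanishes only for
`a = ℓ / (ℓ + 1)`, which lies inside the unit circle.
-/

theorem sum_fin_ite_val_eq {M : Type*} [AddCommMonoid M] (n k : ℕ) (g : ℕ → M) :
    ∑ j : Fin n, (if (j : ℕ) = k then g j else 0) = if k < n then g k else 0 := by
  rw [Fin.sum_univ_eq_sum_range (fun j ↦ if j = k then g j else 0), Finset.sum_ite_eq']
  simp only [Finset.mem_range]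

theorem B0C_apply {ℓ : ℕ} (i j : Fin ℓ) :
    B0C ℓ i j = (if (j : ℕ) = i + 1 then 1 else 0) + (if (j : ℕ) + 1 = i then 1 else 0)
      - 2 * (if (j : ℕ) = i then 1 else 0) + e1 ℓ i * e1 ℓ j := by
  simp only [B0C, e1, Fin.ext_iff]
  split_ifs <;> first | omega | norm_num

theorem e1_dotProduct_succ {ℓ : ℕ} (hℓ : 0 < ℓ) (u : ℕ → ℂ) :
    e1 ℓ ⬝ᵥ (fun j ↦ u (j + 1)) = u 1 := by
  simp only [dotProduct, e1, ite_mul, one_mul, zero_mul]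
  simpa only [hℓ, if_true] using sum_fin_ite_val_eq ℓ 0 (fun j ↦ u (j + 1))

theorem sum_ite_val_add_one_eq {ℓ : ℕ} (i : Fin ℓ) (u : ℕ → ℂ) :
    ∑ j : Fin ℓ, (if (j : ℕ) + 1 = i then u (j + 1) else 0) = u i - u 0 * e1 ℓ i := by
  obtain ⟨_ | m, hi⟩ := i
  · simp [e1]
  · simpa [e1, Nat.lt_of_succ_lt hi] using sum_fin_ite_val_eq ℓ m (fun j ↦ u (j + 1))

theorem sum_ite_val_eq_add_one {ℓ : ℕ} (i : Fin ℓ) (u : ℕ → ℂ) :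
    ∑ j : Fin ℓ, (if (j : ℕ) = i + 1 then u (j + 1) else 0) = u (i + 2) - u (ℓ + 1) * eL ℓ i := by
  rw [sum_fin_ite_val_eq ℓ (i + 1) (fun j ↦ u (j + 1))]
  obtain hi | hi : (i : ℕ) + 1 < ℓ ∨ (i : ℕ) + 1 = ℓ := by omega
  · have hlast : (i : ℕ) ≠ ℓ - 1 := by omega
    simp [eL, hi, hlast]
  · have hlast : (i : ℕ) = ℓ - 1 := by omega
    have hghost : (i : ℕ) + 2 = ℓ + 1 := by omega
    rw [if_neg (not_lt.2 hi.ge), eL, if_pos hlast, mul_one, hghost, sub_self]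

theorem B0C_mulVec_succ (ℓ : ℕ) (u : ℕ → ℂ) :
    B0C ℓ *ᵥ (fun j ↦ u (j + 1)) =
      (fun i : Fin ℓ ↦ u i - 2 * u (i + 1) + u (i + 2))
        + (u 1 - u 0) • e1 ℓ - u (ℓ + 1) • eL ℓ := by
  ext i
  have hdiag : ∑ j : Fin ℓ, (if (j : ℕ) = i then u (j + 1) else 0) = u (i + 1) := by
    rw [sum_fin_ite_val_eq ℓ i (fun j ↦ u (j + 1)), if_pos i.isLt]
  calc (B0C ℓ *ᵥ fun j ↦ u (j + 1)) i
      = ∑ j : Fin ℓ, (if (j : ℕ) = i + 1 then u (j + 1) else 0)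
        + ∑ j : Fin ℓ, (if (j : ℕ) + 1 = i then u (j + 1) else 0)
        - 2 * ∑ j : Fin ℓ, (if (j : ℕ) = i then u (j + 1) else 0)
        + e1 ℓ i * (e1 ℓ ⬝ᵥ fun j ↦ u (j + 1)) := by
        simp only [mulVec, dotProduct, B0C_apply, Finset.mul_sum, ← Finset.sum_add_distrib,
          ← Finset.sum_sub_distrib]
        refine Finset.sum_congr rfl fun j _ ↦ ?_
        simp only [add_mul, sub_mul, mul_assoc, ite_mul, one_mul, zero_mul]
    _ = _ := by
        rw [sum_ite_val_eq_add_one, sum_ite_val_add_one_eq, hdiag, e1_dotProduct_succ i.pos]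
        simp only [Pi.add_apply, Pi.sub_apply, Pi.smul_apply, smul_eq_mul]
        ring

theorem vecMulVec_e1_mulVec_succ (ℓ : ℕ) (u : ℕ → ℂ) :
    vecMulVec (e1 ℓ) (e1 ℓ) *ᵥ (fun j ↦ u (j + 1)) = u 1 • e1 ℓ := by
  ext i
  rw [vecMulVec_mulVec, e1_dotProduct_succ i.pos, op_smul_eq_smul]

theorem B0C_add_smul_vecMulVec_e1_mulVec_affine (ℓ : ℕ) (f : ℂ) :
    (B0C ℓ + f • vecMulVec (e1 ℓ) (e1 ℓ)) *ᵥ (fun j : Fin ℓ ↦ (1 + f) - f * ((j : ℕ) + 1 : ℂ)) =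
      (-(1 - ℓ * f)) • eL ℓ := by
  let u : ℕ → ℂ := fun k ↦ (1 + f) - f * k
  have hsucc : (fun j : Fin ℓ ↦ (1 + f) - f * ((j : ℕ) + 1 : ℂ)) =
      fun j : Fin ℓ ↦ u (j + 1) := by
    simp only [u, Nat.cast_add, Nat.cast_one]
  have hharmonic : (fun i : Fin ℓ ↦ u i - 2 * u (i + 1) + u (i + 2)) = 0 := by
    ext i
    simp only [u, Nat.cast_add, Nat.cast_one, Nat.cast_ofNat, Pi.zero_apply]
    ring
  have hrobin : u 1 - u 0 + f * u 1 = 0 := by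
    simp only [u, Nat.cast_one, Nat.cast_zero]
    ring
  have hghost : u (ℓ + 1) = 1 - ℓ * f := by
    simp only [u, Nat.cast_add, Nat.cast_one]
    ring
  calc (B0C ℓ + f • vecMulVec (e1 ℓ) (e1 ℓ)) *ᵥ (fun j : Fin ℓ ↦ (1 + f) - f * ((j : ℕ) + 1 : ℂ))
      = (u 1 - u 0 + f * u 1) • e1 ℓ - u (ℓ + 1) • eL ℓ := by
        rw [hsucc, add_mulVec, smul_mulVec, vecMulVec_e1_mulVec_succ, B0C_mulVec_succ, hharmonic]
        module
    _ = (-(1 - ℓ * f)) • eL ℓ := by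
        rw [hrobin, hghost, zero_smul, zero_sub, neg_smul]

theorem one_sub_natCast_mul_ne_zero {K : Type*} [Field K] [CharZero K] {n : ℕ} {a : K}
    (ha₀ : a ≠ 0) (ha : a ≠ n / (n + 1)) : 1 - n * (-1 + a⁻¹) ≠ 0 := by
  intro h
  have hn : (n + 1 : K) ≠ 0 := n.cast_add_one_ne_zero
  refine ha ((eq_div_iff hn).2 ?_)
  field_simp at h
  linear_combination h

theorem norm_natCast_div_add_one_lt_one {𝕜 : Type*} [RCLike 𝕜] (n : ℕ) :
    ‖(n / (n + 1) : 𝕜)‖ < 1 := by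
  rw [← Nat.cast_add_one, norm_div, RCLike.norm_natCast, RCLike.norm_natCast,
    div_lt_one (by positivity)]
  exact_mod_cast n.lt_succ_self

theorem exp_I_mul_ofReal_ne_natCast_div_add_one (ω : ℝ) (n : ℕ) :
    exp (I * ω) ≠ n / (n + 1) := fun h ↦
  (norm_natCast_div_add_one_lt_one (𝕜 := ℂ) n).ne (h ▸ norm_exp_I_mul_ofReal ω)

theorem fd_ellx1_zeroth_order_general (ℓ : ℕ) (hℓ : 0 < ℓ) (a f : ℂ)
    (ha₀ : a ≠ 0) (ha : a ≠ ℓ / (ℓ + 1)) (hf : f = -1 + a⁻¹)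
    (β₀ : Fin ℓ → ℂ)
    (hβ₀ : ∀ j : Fin ℓ,
      β₀ j = (a ^ ℓ / (1 - ℓ * f)) * ((1 + f) - f * ((j : ℕ) + 1 : ℂ))) :
    1 - ℓ * f ≠ 0 ∧
    (B0C ℓ + f • vecMulVec (e1 ℓ) (e1 ℓ)) *ᵥ β₀ = (-(a ^ ℓ)) • eL ℓ ∧
    β₀ ⟨0, hℓ⟩ = a ^ ℓ / (1 + ℓ - ℓ * a⁻¹) := by
  have hne : 1 - ℓ * f ≠ 0 := hf ▸ one_sub_natCast_mul_ne_zero ha₀ ha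
  have hβ₀_smul : β₀ = (a ^ ℓ / (1 - ℓ * f)) • fun j : Fin ℓ ↦ (1 + f) - f * ((j : ℕ) + 1 : ℂ) :=
    funext hβ₀
  refine ⟨hne, ?_, ?_⟩
  · rw [hβ₀_smul, mulVec_smul, B0C_add_smul_vecMulVec_e1_mulVec_affine, smul_smul, mul_neg,
      div_mul_cancel₀ _ hne]
  · have hden : 1 - ℓ * f = 1 + ℓ - ℓ * a⁻¹ := by rw [hf]; ring
    rw [hβ₀, hden]
    simp

theorem fd_ellx1_zeroth_order (ℓ : ℕ) (hℓ : 0 < ℓ) (ω₁ : ℝ) (a f : ℂ)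
    (ha : a = Complex.exp (Complex.I * ω₁)) (hf : f = -1 + a⁻¹)
    (β₀ : Fin ℓ → ℂ)
    (hβ₀ : ∀ j : Fin ℓ,
      β₀ j = (a ^ ℓ / (1 - ℓ * f)) * ((1 + f) - f * ((j : ℕ) + 1 : ℂ))) :
    1 - ℓ * f ≠ 0 ∧
    (B0C ℓ + f • Matrix.vecMulVec (e1 ℓ) (e1 ℓ)).mulVec β₀ = (-(a ^ ℓ)) • eL ℓ ∧
    β₀ ⟨0, hℓ⟩ = a ^ ℓ / (1 + ℓ - ℓ * a⁻¹) := by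
  subst ha
  exact fd_ellx1_zeroth_order_general ℓ hℓ _ f (exp_ne_zero _)
    (exp_I_mul_ofReal_ne_natCast_div_add_one ω₁ ℓ) hf β₀ hβ₀
end
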